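/- In G the following three identities hold: j⁴a₁j⁻⁴ = a₃a₂⁻³a₃³a₁, j⁴a₂j⁻⁴ = a₃⁻¹, and j⁴a₃j⁻⁴ = a₁⁻¹a₂⁻¹a₁a₂²a₁⁻¹a₂⁻¹a₁a₃⁻¹a₁⁻¹a₂a₁. -/

import Mathlib

/-!
The subgroup `K = ⟨u, v⟩` is finite: `j = (uv)²` is central in it, `K/⟨j⟩` is the `(2,3,4)`
triangle group, and `j¹² = 1` because `uv⁻¹u` conjugates `v` to `j³v⁻¹` (`gj_pow_twelve`).
Consequently every element of `K` has a normal form `vᵃ jⁱ t` with `t` one of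
`1, u, uv, uv², uv³, uv³u`, reached by a handful of rewriting rules.

Since `b` commutes with `v`, the remaining relators say that `bjb = vj⁻¹` (from `(buvu)²v = 1`,
whence `b⁻¹ = v⁻¹jbj`) and that `bub = ubu` (from `(buv)³ = 1`). With powers of `v` pushed to the
left, they yield rules that shorten `bkb` for `k = 1, j, j², uvˢ, juvˢ`. Geometrically, a word
`k₀bk₁b⋯bkₙ` with `kᵢ ∈ K` is an edge path in the graph on `G/K` with edges `gK — gbK`, and these
rules replace two sides of a triangle by the third side or remove a backtrack.

Each `aᵢ` and each `aᵢ⁻¹` is a word with a single `b`. The shortening rules alone prove the second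
identity. In the other two, a path of length 8, respectively 12, has to be contracted to an edge,
and for this the path must also be pushed across pairs of triangles with a common edge, without
change of length: the rules `flip1`, `flip2` for the first identity, and `flip3`, `flip4`, `flip5`
for the third.
-/

set_option linter.unusedSimpArgs false

/-- Generators of the Cartwright–Steger lattice presentation. -/
inductive CSgen : Type
  | u : CSgen
  | v : CSgen
  | b : CSgen

open FreeGroup in
/-- Relators of the Cartwright–Steger lattice:
`u³ = v⁴ = b³ = 1`, `(uv)² = (vu)²`, `vb = bv`, `(buv)³ = 1`, `(buvu)²v = 1`. -/
def csRels : Set (FreeGroup CSgen) :=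
  { (of CSgen.u) ^ 3,
    (of CSgen.v) ^ 4,
    (of CSgen.b) ^ 3,
    (of CSgen.u * of CSgen.v) ^ 2 * ((of CSgen.v * of CSgen.u) ^ 2)⁻¹,
    of CSgen.v * of CSgen.b * (of CSgen.b * of CSgen.v)⁻¹,
    (of CSgen.b * of CSgen.u * of CSgen.v) ^ 3,
    (of CSgen.b * of CSgen.u * of CSgen.v * of CSgen.u) ^ 2 * of CSgen.v }

/-- The Cartwright–Steger lattice, as an abstract presented group. -/
abbrev CS : Type := PresentedGroup csRels

def gu : CS := PresentedGroup.of CSgen.u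
def gv : CS := PresentedGroup.of CSgen.v
def gb : CS := PresentedGroup.of CSgen.b
/-- `j = (uv)²`. -/
def gj : CS := (gu * gv) ^ 2

/-- `a₁ = vuv⁻¹j⁴buvj²`. -/
def a1 : CS := gv * gu * gv⁻¹ * gj ^ 4 * gb * gu * gv * gj ^ 2
/-- `a₂ = v²ubuv⁻¹uv²j`. -/
def a2 : CS := gv ^ 2 * gu * gb * gu * gv⁻¹ * gu * gv ^ 2 * gj
/-- `a₃ = u⁻¹v²uj⁹bv⁻¹uv⁻¹j⁸`. -/
def a3 : CS := gu⁻¹ * gv ^ 2 * gu * gj ^ 9 * gb * gv⁻¹ * gu * gv⁻¹ * gj ^ 8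

/-- The subgroup `Π` generated by `a₁`, `a₂`, `a₃`. -/
def PiGrp : Subgroup CS := Subgroup.closure {a1, a2, a3}

lemma a1_mem : a1 ∈ PiGrp := Subgroup.subset_closure (Set.mem_insert _ _)
lemma a2_mem : a2 ∈ PiGrp :=
  Subgroup.subset_closure (Set.mem_insert_of_mem _ (Set.mem_insert _ _))
lemma a3_mem : a3 ∈ PiGrp :=
  Subgroup.subset_closure (Set.mem_insert_of_mem _ (Set.mem_insert_of_mem _ (Set.mem_singleton _)))

/-! ### The defining relations -/

lemma gu_cube : gu ^ 3 = 1 :=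
  PresentedGroup.one_of_mem (rels := csRels) (x := FreeGroup.of CSgen.u ^ 3) (by simp [csRels])

lemma gv_fourth : gv ^ 4 = 1 :=
  PresentedGroup.one_of_mem (rels := csRels) (x := FreeGroup.of CSgen.v ^ 4) (by simp [csRels])

lemma gb_cube : gb ^ 3 = 1 :=
  PresentedGroup.one_of_mem (rels := csRels) (x := FreeGroup.of CSgen.b ^ 3) (by simp [csRels])

lemma gu_gv_braid : (gu * gv) ^ 2 = (gv * gu) ^ 2 :=
  mul_inv_eq_one.1 <| PresentedGroup.one_of_mem (rels := csRels)
    (x := (FreeGroup.of CSgen.u * FreeGroup.of CSgen.v) ^ 2 *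
      ((FreeGroup.of CSgen.v * FreeGroup.of CSgen.u) ^ 2)⁻¹) (by simp [csRels])

lemma gv_gb : gv * gb = gb * gv :=
  mul_inv_eq_one.1 <| PresentedGroup.one_of_mem (rels := csRels)
    (x := FreeGroup.of CSgen.v * FreeGroup.of CSgen.b *
      (FreeGroup.of CSgen.b * FreeGroup.of CSgen.v)⁻¹) (by simp [csRels])

lemma buv_cube : (gb * gu * gv) ^ 3 = 1 :=
  PresentedGroup.one_of_mem (rels := csRels)
    (x := (FreeGroup.of CSgen.b * FreeGroup.of CSgen.u * FreeGroup.of CSgen.v) ^ 3)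
    (by simp [csRels])

lemma buvu_sq : (gb * gu * gv * gu) ^ 2 * gv = 1 :=
  PresentedGroup.one_of_mem (rels := csRels)
    (x := (FreeGroup.of CSgen.b * FreeGroup.of CSgen.u * FreeGroup.of CSgen.v *
      FreeGroup.of CSgen.u) ^ 2 * FreeGroup.of CSgen.v)
    (by simp [csRels])

/-! ### The finite subgroup generated by `u` and `v`

A lemma `rw_w` rewrites a word starting with `w` (for `rw_v` and `rw_j`, the relations `v⁴ = 1` and
`j¹² = 1`). The tail `x` makes it applicable anywhere inside a right-associated word. -/

lemma rw_uuu (x : CS) : gu * (gu * (gu * x)) = x := by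
  simpa only [pow_succ, pow_zero, one_mul, mul_assoc] using congrArg (· * x) gu_cube

lemma rw_v (x : CS) : gv * (gv * (gv * (gv * x))) = x := by
  simpa only [pow_succ, pow_zero, one_mul, mul_assoc] using congrArg (· * x) gv_fourth

lemma rw_uvuv (x : CS) : gu * (gv * (gu * (gv * x))) = gj * x := by
  simp only [gj, pow_two, mul_assoc]

lemma rw_vuvu (x : CS) : gv * (gu * (gv * (gu * x))) = gj * x := by
  rw [gj, gu_gv_braid]
  simp only [pow_two, mul_assoc]

lemma rw_jv (x : CS) : gj * (gv * x) = gv * (gj * x) := by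
  rw [← rw_vuvu, ← rw_uvuv]

lemma rw_uj (x : CS) : gu * (gj * x) = gj * (gu * x) := by
  rw [← rw_vuvu, ← rw_uvuv]

lemma rw_uvj (x : CS) : gu * (gv * (gj * x)) = gj * (gu * (gv * x)) := by rw [← rw_jv, rw_uj]
lemma rw_uvvj (x : CS) :
    gu * (gv * (gv * (gj * x))) =
      gj * (gu * (gv * (gv * x))) := by
  rw [← rw_jv, rw_uvj]
lemma rw_uvvvj (x : CS) :
    gu * (gv * (gv * (gv * (gj * x)))) =
      gj * (gu * (gv * (gv * (gv * x)))) := by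
  rw [← rw_jv, rw_uvvj]

lemma rw_uvu (x : CS) : gu * (gv * (gu * x)) = gv * (gv * (gv * (gj * x))) := by
  simpa only [rw_v, rw_jv] using rw_uvuv (gv * (gv * (gv * x)))

lemma rw_vuv (x : CS) : gv * (gu * (gv * x)) = gj * (gu * (gu * x)) := by
  simpa only [rw_uuu] using rw_vuvu (gu * (gu * x))

/-- Obtained by squaring `vuv = ju⁻¹`. -/
lemma rw_uvvu (x : CS) :
    gu * (gv * (gv * (gu * x))) =
      gv * (gv * (gv * (gj * (gj * (gu * (gv * (gv * (gv * x)))))))) := by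
  apply mul_left_cancel (a := gv)
  calc gv * (gu * (gv * (gv * (gu * x))))
      = gv * (gu * (gv * (gv * (gu * (gv * (gv * (gv * (gv * x)))))))) := by rw [rw_v]
    _ = gj * (gu * (gu * (gj * (gu * (gu * (gv * (gv * (gv * x)))))))) := by rw [rw_vuv, rw_vuv]
    _ = gv * (gv * (gv * (gv * (gj * (gj * (gu * (gv * (gv * (gv * x))))))))) := by
      simp only [rw_v, rw_uj, rw_uuu]

/-- `uv⁻¹u` conjugates `v` to `j³v⁻¹`. -/
lemma rw_uvvvuv (x : CS) :
    gu * (gv * (gv * (gv * (gu * (gv * x))))) =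
      gv * (gv * (gv * (gj * (gj * (gj * (gu * (gv * (gv * (gv * (gu * x)))))))))) := by
  have h : gu * (gv * x) = gv * (gv * (gv * (gj * (gu * (gu * x))))) := by rw [← rw_vuv, rw_v]
  rw [h, rw_v, rw_uvvj, rw_uvvu]
  simp only [rw_jv]

/-- As `uv⁻¹u` conjugates `v` to `j³v⁻¹` with `j` and `v` commuting, `v⁴ = 1` gives `j¹² = 1`. -/
lemma gj_pow_twelve : gj ^ 12 = 1 := by
  have h : (gu * gv * gv * gv * gu) * gv * (gu * gv * gv * gv * gu)⁻¹ = gj ^ 3 * gv ^ 3 := by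
    rw [mul_inv_eq_iff_eq_mul]
    simpa only [pow_succ, pow_zero, one_mul, mul_assoc, mul_one, rw_jv] using rw_uvvvuv 1
  have h4 := congrArg (· ^ 4) h
  have hjv : gj * gv = gv * gj := by simpa using rw_jv 1
  simp only [conj_pow, gv_fourth, ((show Commute gj gv from hjv).pow_pow 3 3).mul_pow,
    ← pow_mul] at h4
  have h12 : gv ^ (3 * 4) = 1 := by rw [mul_comm, pow_mul, gv_fourth, one_pow]
  rw [h12] at h4
  simpa using h4.symm

lemma rw_j (x : CS) :
    gj * (gj * (gj * (gj * (gj * (gj * (gj * (gj * (gj * (gj * (gj * (gj * x))))))))))) =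
      x := by
  simpa only [pow_succ, pow_zero, one_mul, mul_assoc] using congrArg (· * x) gj_pow_twelve

lemma rw_uu (x : CS) : gu * (gu * x) = gv * (gj ^ 11 * (gu * (gv * x))) := by
  apply mul_left_cancel (a := gj)
  rw [← rw_vuv]
  simp only [pow_succ, pow_zero, one_mul, mul_assoc, rw_jv, rw_j]

/-! ### Rules that shorten words in `b` -/

lemma rw_bv (x : CS) : gb * (gv * x) = gv * (gb * x) := by
  rw [← mul_assoc, ← gv_gb, mul_assoc]

lemma rw_bbb (x : CS) : gb * (gb * (gb * x)) = x := by
  simpa only [pow_succ, pow_zero, one_mul, mul_assoc] using congrArg (· * x) gb_cube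

/-- This is `(buvu)²v = 1`, as `uvu = jv⁻¹`. -/
lemma rw_bjb (x : CS) : gb * (gj * (gb * x)) = gv * (gj ^ 11 * x) := by
  apply mul_left_cancel (a := gv ^ 3)
  have h := congrArg (· * (gj ^ 11 * x)) buvu_sq
  simpa only [pow_succ, pow_zero, one_mul, mul_assoc, rw_jv, rw_uvu, rw_bv, rw_v, rw_j] using h

/-- `b⁻¹ = v⁻¹jbj`, with `b⁻¹` written as `b²`. -/
lemma rw_bb (x : CS) : gb * (gb * x) = gv * (gv * (gv * (gj * (gb * (gj * x))))) := by
  apply mul_left_cancel (a := gb)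
  simp only [rw_bbb, rw_bv, rw_bjb, pow_succ, pow_zero, one_mul, mul_assoc, rw_v, rw_j]

/-- This is `(b⁻¹)² = b`, rewritten with `b⁻¹ = v⁻¹jbj`. -/
lemma rw_bjjb (x : CS) :
    gb * (gj * (gj * (gb * x))) =
      gv * (gv * (gj ^ 11 * (gb * (gj ^ 11 * x)))) := by
  have h := rw_bbb (gb * (gj ^ 11 * x))
  rw [rw_bb, rw_bb] at h
  have hb := congrArg (fun y => (gv * gv * gj ^ 11) * y) h
  simpa only [rw_bv, pow_succ, pow_zero, one_mul, mul_assoc, rw_jv, rw_v, rw_j] using hb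

/-- The braid relation `bub = ubu`, a form of `(buv)³ = 1`. -/
lemma rw_bub (x : CS) : gb * (gu * (gb * x)) = gu * (gb * (gu * x)) := by
  have key (x : CS) :
      gb * (gu * (gv * (gb * (gu * (gv * x))))) =
        gu * (gb * (gu * (gv * (gu * (gv * x))))) := by
    apply mul_left_cancel (a := gb * gu * gv)
    have h := congrArg (· * x) buv_cube
    simp only [pow_succ, pow_zero, one_mul, mul_assoc, rw_uvu, rw_bv, rw_v, rw_jv, rw_bjb, rw_j]
      at h ⊢
    exact h
  have h := key (gv * (gv * (gv * (gu * (gu * (gv * (gv * (gv * x))))))))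
  simp only [rw_v, rw_uuu, rw_bv] at h
  exact h

lemma rw_buvb (x : CS) :
    gb * (gu * (gv * (gb * x))) =
      gu * (gb * (gu * (gv * x))) := by
  rw [← rw_bv, rw_bub]
lemma rw_buvvb (x : CS) :
    gb * (gu * (gv * (gv * (gb * x)))) =
      gu * (gb * (gu * (gv * (gv * x)))) := by
  rw [← rw_bv, rw_buvb]
lemma rw_buvvvb (x : CS) :
    gb * (gu * (gv * (gv * (gv * (gb * x))))) =
      gu * (gb * (gu * (gv * (gv * (gv * x))))) := by
  rw [← rw_bv, rw_buvvb]

/-- The inverse of the braid relation, rewritten with `b⁻¹ = v⁻¹jbj`. -/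
lemma rw_bjub (x : CS) :
    gb * (gj * (gu * (gb * x))) =
      gv * (gj ^ 11 * (gu * (gv * (gb * (gj ^ 11 * (gu * (gv * x))))))) := by
  apply mul_left_cancel (a := gb * gj)
  simp only [pow_succ, pow_zero, one_mul, mul_assoc, rw_uvu, rw_uj, rw_uvj, rw_bv, rw_v,
    rw_jv, rw_bjb, rw_j, rw_buvb]

lemma rw_bjuvb (x : CS) :
    gb * (gj * (gu * (gv * (gb * x)))) =
      gv * (gj ^ 11 * (gu * (gv * (gb * (gj ^ 11 * (gu * (gv * (gv * x)))))))) := by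
  rw [← rw_bv, rw_bjub]
lemma rw_bjuvvb (x : CS) :
    gb * (gj * (gu * (gv * (gv * (gb * x))))) =
      gv * (gj ^ 11 * (gu * (gv * (gb * (gj ^ 11 * (gu * (gv * (gv * (gv * x))))))))) := by
  rw [← rw_bv, rw_bjuvb]
lemma rw_bjuvvvb (x : CS) :
    gb * (gj * (gu * (gv * (gv * (gv * (gb * x)))))) =
      gv * (gj ^ 11 * (gu * (gv * (gb * (gj ^ 11 * (gu * x)))))) := by
  rw [← rw_bv, rw_bjuvvb, rw_v]

/-! ### Rules that preserve the length in `b`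

Each rule replaces the middle vertex of a path of two edges by an adjacent vertex. Multiplying on
the left by the inverse of the first edge on the right-hand side (up to a factor that does not
matter for cancellation) makes both sides shorten to a word with a single `b`. -/

lemma flip1 (x : CS) :
    gb * (gj * (gj * (gu * (gv * (gv * (gb * x)))))) =
      gv * (gj ^ 11 * (gu * (gv * (gb * (gj ^ 11 * (gu * (gv * (gv * (gb * (gj ^ 11 * (gv * (gv *
        x)))))))))))) := by
  apply mul_left_cancel (a := gb * gj * gu)
  simp only [pow_succ, pow_zero, one_mul, mul_assoc, rw_v, rw_j, rw_jv, rw_uj, rw_uvj, rw_uvvj,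
    rw_uvvvj, rw_uu, rw_uvu, rw_uvvu, rw_uvvvuv, rw_bv, rw_bb, rw_bjb, rw_bjjb, rw_bub, rw_buvb,
    rw_buvvb, rw_buvvvb, rw_bjub, rw_bjuvb, rw_bjuvvb, rw_bjuvvvb]

lemma flip2 (x : CS) :
    gb * (gj * (gj * (gu * (gv * (gv * (gb * x)))))) =
      gv * (gu * (gv ^ 3 * (gb * (gj ^ 2 * (gu * (gb * (gj ^ 11 * (gu * x)))))))) := by
  apply mul_left_cancel (a := gb * gj * gv * gu ^ 2 * gv ^ 3)
  simp only [pow_succ, pow_zero, one_mul, mul_assoc, rw_v, rw_j, rw_jv, rw_uj, rw_uvj, rw_uvvj,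
    rw_uvvvj, rw_uu, rw_uvu, rw_uvvu, rw_uvvvuv, rw_bv, rw_bb, rw_bjb, rw_bjjb, rw_bub, rw_buvb,
    rw_buvvb, rw_buvvvb, rw_bjub, rw_bjuvb, rw_bjuvvb, rw_bjuvvvb]

lemma flip3 (x : CS) :
    gb * (gj * (gj * (gj * (gu * (gv * (gv * (gv * (gu * (gb * x))))))))) =
      gv ^ 2 * (gj ^ 11 * (gu * (gv * (gb * (gu * (gv ^ 3 * (gu * (gb * (gu * (gv *
        x)))))))))) := by
  apply mul_left_cancel (a := gb * gj * gv ^ 3 * gu ^ 2 * gj * gv ^ 2)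
  simp only [pow_succ, pow_zero, one_mul, mul_assoc, rw_v, rw_j, rw_jv, rw_uj, rw_uvj, rw_uvvj,
    rw_uvvvj, rw_uu, rw_uvu, rw_uvvu, rw_uvvvuv, rw_bv, rw_bb, rw_bjb, rw_bjjb, rw_bub, rw_buvb,
    rw_buvvb, rw_buvvvb, rw_bjub, rw_bjuvb, rw_bjuvvb, rw_bjuvvvb]

lemma flip4 (x : CS) :
    gb * (gj * (gj * (gj * (gj * (gj * (gj * (gj * (gj * (gj * (gj * (gj * (gu * (gv * (gv *
      (gb * x))))))))))))))) =
      gj ^ 11 * (gu * (gv ^ 2 * (gb * (gj ^ 11 * (gu * (gv * (gb * (gu * (gv * x))))))))) := by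
  apply mul_left_cancel (a := gb * gj * gv ^ 2 * gu ^ 2 * gj)
  simp only [pow_succ, pow_zero, one_mul, mul_assoc, rw_v, rw_j, rw_jv, rw_uj, rw_uvj, rw_uvvj,
    rw_uvvvj, rw_uu, rw_uvu, rw_uvvu, rw_uvvvuv, rw_bv, rw_bb, rw_bjb, rw_bjjb, rw_bub, rw_buvb,
    rw_buvvb, rw_buvvvb, rw_bjub, rw_bjuvb, rw_bjuvvb, rw_bjuvvvb]

lemma flip5 (x : CS) :
    gb * (gj * (gj * (gj * (gb * x)))) =
      gv ^ 3 * (gj ^ 11 * (gb * (gj ^ 11 * (gb * (gj ^ 11 * x))))) := by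
  apply mul_left_cancel (a := gb * gj ^ 2 * gv)
  simp only [pow_succ, pow_zero, one_mul, mul_assoc, rw_v, rw_j, rw_jv, rw_uj, rw_uvj, rw_uvvj,
    rw_uvvvj, rw_uu, rw_uvu, rw_uvvu, rw_uvvvuv, rw_bv, rw_bb, rw_bjb, rw_bjjb, rw_bub, rw_buvb,
    rw_buvvb, rw_buvvvb, rw_bjub, rw_bjuvb, rw_bjuvvb, rw_bjuvvvb]

/-! ### Words for `a₁`, `a₂`, `a₃` and their inverses -/

/-- Allows equations between words to be proved with the tailed rules. -/
lemma eq_of_mul_tail {g h : CS} (H : ∀ x, g * x = h * x) : g = h := mul_right_cancel (H 1)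

lemma gu_inv : gu⁻¹ = gu ^ 2 := inv_eq_of_mul_eq_one_right (by rw [← pow_succ', gu_cube])
lemma gv_inv : gv⁻¹ = gv ^ 3 := inv_eq_of_mul_eq_one_right (by rw [← pow_succ', gv_fourth])

lemma a1_word : a1 = gv * gj ^ 4 * gu * gv ^ 3 * gb * gj ^ 2 * gu * gv := by
  refine eq_of_mul_tail fun x => ?_
  rw [a1, gv_inv]
  simp only [pow_succ, pow_zero, one_mul, mul_assoc, rw_v, rw_j, rw_jv, rw_uj, rw_uvj, rw_uvvj,
    rw_uvvvj, rw_uu, rw_uvu, rw_uvvu, rw_uvvvuv, rw_bv, rw_bb, rw_bjb, rw_bjjb, rw_bub, rw_buvb,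
    rw_buvvb, rw_buvvvb, rw_bjub, rw_bjuvb, rw_bjuvvb, rw_bjuvvvb]

lemma a2_word : a2 = gv ^ 2 * gu * gv ^ 2 * gb * gj ^ 7 * gu * gv ^ 3 * gu := by
  refine eq_of_mul_tail fun x => ?_
  rw [a2, gv_inv]
  simp only [pow_succ, pow_zero, one_mul, mul_assoc, rw_v, rw_j, rw_jv, rw_uj, rw_uvj, rw_uvvj,
    rw_uvvvj, rw_uu, rw_uvu, rw_uvvu, rw_uvvvuv, rw_bv, rw_bb, rw_bjb, rw_bjjb, rw_bub, rw_buvb,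
    rw_buvvb, rw_buvvvb, rw_bjub, rw_bjuvb, rw_bjuvvb, rw_bjuvvvb]

lemma a3_word : a3 = gv ^ 2 * gj ^ 5 * gu * gv ^ 3 * gu * gb * gj ^ 8 * gu * gv ^ 3 := by
  refine eq_of_mul_tail fun x => ?_
  rw [a3, gv_inv, gu_inv]
  simp only [pow_succ, pow_zero, one_mul, mul_assoc, rw_v, rw_j, rw_jv, rw_uj, rw_uvj, rw_uvvj,
    rw_uvvvj, rw_uu, rw_uvu, rw_uvvu, rw_uvvvuv, rw_bv, rw_bb, rw_bjb, rw_bjjb, rw_bub, rw_buvb,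
    rw_buvvb, rw_buvvvb, rw_bjub, rw_bjuvb, rw_bjuvvb, rw_bjuvvvb]

lemma a1_inv_word : a1⁻¹ = gj ^ 10 * gu * gv ^ 2 * gb * gj ^ 8 * gu := by
  refine inv_eq_of_mul_eq_one_right (eq_of_mul_tail fun x => ?_)
  rw [a1_word]
  simp only [pow_succ, pow_zero, one_mul, mul_assoc, rw_v, rw_j, rw_jv, rw_uj, rw_uvj, rw_uvvj,
    rw_uvvvj, rw_uu, rw_uvu, rw_uvvu, rw_uvvvuv, rw_bv, rw_bb, rw_bjb, rw_bjjb, rw_bub, rw_buvb,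
    rw_buvvb, rw_buvvvb, rw_bjub, rw_bjuvb, rw_bjuvvb, rw_bjuvvvb]

lemma a2_inv_word : a2⁻¹ = gv ^ 2 * gj * gu * gv ^ 3 * gu * gb * gu * gv ^ 3 := by
  refine inv_eq_of_mul_eq_one_right (eq_of_mul_tail fun x => ?_)
  rw [a2_word]
  simp only [pow_succ, pow_zero, one_mul, mul_assoc, rw_v, rw_j, rw_jv, rw_uj, rw_uvj, rw_uvvj,
    rw_uvvvj, rw_uu, rw_uvu, rw_uvvu, rw_uvvvuv, rw_bv, rw_bb, rw_bjb, rw_bjjb, rw_bub, rw_buvb,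
    rw_buvvb, rw_buvvvb, rw_bjub, rw_bjuvb, rw_bjuvvb, rw_bjuvvvb]

lemma a3_inv_word : a3⁻¹ = gv ^ 2 * gj ^ 4 * gu * gv ^ 2 * gb * gj ^ 3 * gu * gv ^ 3 * gu := by
  refine inv_eq_of_mul_eq_one_right (eq_of_mul_tail fun x => ?_)
  rw [a3_word]
  simp only [pow_succ, pow_zero, one_mul, mul_assoc, rw_v, rw_j, rw_jv, rw_uj, rw_uvj, rw_uvvj,
    rw_uvvvj, rw_uu, rw_uvu, rw_uvvu, rw_uvvvuv, rw_bv, rw_bb, rw_bjb, rw_bjjb, rw_bub, rw_buvb,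
    rw_buvvb, rw_buvvvb, rw_bjub, rw_bjuvb, rw_bjuvvb, rw_bjuvvvb]

/-- The part of the first identity in which `flip1` is needed: its right-hand side with the factor
`a₃a₂⁻³` removed, times `j⁴`. -/
lemma a3_cube_mul (x : CS) :
    a3 ^ 3 * (a1 * (gj ^ 4 * x)) =
      gj ^ 11 * (gu * (gv ^ 2 * (gb * (gj ^ 11 * (gu * (gv ^ 3 * (gb * (gj ^ 9 * (gu * (gv ^ 3 *
        (gu * x))))))))))) := by
  rw [a3_word, a1_word]
  simp only [pow_succ, pow_zero, one_mul, mul_assoc, rw_v, rw_j, rw_jv, rw_uj, rw_uvj, rw_uvvj,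
    rw_uvvvj, rw_uu, rw_uvu, rw_uvvu, rw_uvvvuv, rw_bv, rw_bb, rw_bjb, rw_bjjb, rw_bub, rw_buvb,
    rw_buvvb, rw_buvvvb, rw_bjub, rw_bjuvb, rw_bjuvvb, rw_bjuvvvb]
  rw [flip1]
  simp only [pow_succ, pow_zero, one_mul, mul_assoc, rw_v, rw_j, rw_jv, rw_uj, rw_uvj, rw_uvvj,
    rw_uvvvj, rw_uu, rw_uvu, rw_uvvu, rw_uvvvuv, rw_bv, rw_bb, rw_bjb, rw_bjjb, rw_bub, rw_buvb,
    rw_buvvb, rw_buvvvb, rw_bjub, rw_bjuvb, rw_bjuvvb, rw_bjuvvvb]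

/-- the identities `j⁴a₁j⁻⁴ = a₃a₂⁻³a₃³a₁`, `j⁴a₂j⁻⁴ = a₃⁻¹` and
`j⁴a₃j⁻⁴ = a₁⁻¹a₂⁻¹a₁a₂²a₁⁻¹a₂⁻¹a₁a₃⁻¹a₁⁻¹a₂a₁` hold in `G`. -/
theorem stmt_8 :
    gj ^ 4 * a1 * (gj ^ 4)⁻¹ = a3 * a2 ^ (-3 : ℤ) * a3 ^ 3 * a1 ∧
    gj ^ 4 * a2 * (gj ^ 4)⁻¹ = a3⁻¹ ∧
    gj ^ 4 * a3 * (gj ^ 4)⁻¹ =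
      a1⁻¹ * a2⁻¹ * a1 * a2 ^ 2 * a1⁻¹ * a2⁻¹ * a1 * a3⁻¹ * a1⁻¹ * a2 * a1 := by
  refine ⟨?_, ?_, ?_⟩ <;> rw [mul_inv_eq_iff_eq_mul] <;> refine eq_of_mul_tail fun x => ?_
  · have h2 : a2 ^ (-3 : ℤ) = (a2⁻¹) ^ 3 := by simp
    simp only [h2, mul_assoc]
    rw [a3_cube_mul, a2_inv_word, a3_word, a1_word]
    simp only [pow_succ, pow_zero, one_mul, mul_assoc, rw_v, rw_j, rw_jv, rw_uj, rw_uvj, rw_uvvj,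
      rw_uvvvj, rw_uu, rw_uvu, rw_uvvu, rw_uvvvuv, rw_bv, rw_bb, rw_bjb, rw_bjjb, rw_bub, rw_buvb,
      rw_buvvb, rw_buvvvb, rw_bjub, rw_bjuvb, rw_bjuvvb, rw_bjuvvvb]
    rw [flip2]
    simp only [pow_succ, pow_zero, one_mul, mul_assoc, rw_v, rw_j, rw_jv, rw_uj, rw_uvj, rw_uvvj,
      rw_uvvvj, rw_uu, rw_uvu, rw_uvvu, rw_uvvvuv, rw_bv, rw_bb, rw_bjb, rw_bjjb, rw_bub, rw_buvb,
      rw_buvvb, rw_buvvvb, rw_bjub, rw_bjuvb, rw_bjuvvb, rw_bjuvvvb]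
  · rw [a3_inv_word, a2_word]
    simp only [pow_succ, pow_zero, one_mul, mul_assoc, rw_v, rw_j, rw_jv, rw_uj, rw_uvj, rw_uvvj,
      rw_uvvvj, rw_uu, rw_uvu, rw_uvvu, rw_uvvvuv, rw_bv, rw_bb, rw_bjb, rw_bjjb, rw_bub, rw_buvb,
      rw_buvvb, rw_buvvvb, rw_bjub, rw_bjuvb, rw_bjuvvb, rw_bjuvvvb]
  · rw [a1_inv_word, a2_inv_word, a3_inv_word, a1_word, a2_word, a3_word]
    simp only [pow_succ, pow_zero, one_mul, mul_assoc, rw_v, rw_j, rw_jv, rw_uj, rw_uvj, rw_uvvj,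
      rw_uvvvj, rw_uu, rw_uvu, rw_uvvu, rw_uvvvuv, rw_bv, rw_bb, rw_bjb, rw_bjjb, rw_bub, rw_buvb,
      rw_buvvb, rw_buvvvb, rw_bjub, rw_bjuvb, rw_bjuvvb, rw_bjuvvvb]
    rw [flip3]
    simp only [pow_succ, pow_zero, one_mul, mul_assoc, rw_v, rw_j, rw_jv, rw_uj, rw_uvj, rw_uvvj,
      rw_uvvvj, rw_uu, rw_uvu, rw_uvvu, rw_uvvvuv, rw_bv, rw_bb, rw_bjb, rw_bjjb, rw_bub, rw_buvb,
      rw_buvvb, rw_buvvvb, rw_bjub, rw_bjuvb, rw_bjuvvb, rw_bjuvvvb]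
    rw [flip4]
    simp only [pow_succ, pow_zero, one_mul, mul_assoc, rw_v, rw_j, rw_jv, rw_uj, rw_uvj, rw_uvvj,
      rw_uvvvj, rw_uu, rw_uvu, rw_uvvu, rw_uvvvuv, rw_bv, rw_bb, rw_bjb, rw_bjjb, rw_bub, rw_buvb,
      rw_buvvb, rw_buvvvb, rw_bjub, rw_bjuvb, rw_bjuvvb, rw_bjuvvvb]
    rw [flip5]
    simp only [pow_succ, pow_zero, one_mul, mul_assoc, rw_v, rw_j, rw_jv, rw_uj, rw_uvj, rw_uvvj,
      rw_uvvvj, rw_uu, rw_uvu, rw_uvvu, rw_uvvvuv, rw_bv, rw_bb, rw_bjb, rw_bjjb, rw_bub, rw_buvb,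
      rw_buvvb, rw_buvvvb, rw_bjub, rw_bjuvb, rw_bjuvvb, rw_bjuvvvb]
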